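/- arXiv:2203.15765 — 2 statements merged into one kernel-verified Lean document; each statement's English description precedes it below -/
import Mathlib

section
/- Let U, V ∈ SO(3), S = diag(s₁,s₂,s₃), A = U S Vᵀ, and set z₁ = s₁−s₂−s₃, z₂ = s₂−s₁−s₃, z₃ = s₃−s₁−s₂, z₄ = s₁+s₂+s₃. For i = 1,2,3,4 let mᵢ ∈ S³ be unit quaternions with γ(mᵢ) = U Eᵢ Vᵀ. Then for every unit quaternion q ∈ S³, tr(Aᵀ γ(q)) = Σᵢ₌₁⁴ zᵢ (mᵢ·q)². Equivalently, tr(A Rᵀ) = qᵀ M Z Mᵀ q where R = γ(q), M is the orthogonal matrix with columns m₁,…,m₄, and Z = diag(z₁,z₂,z₃,z₄). -/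
/-!
For unit quaternions `p, q` one has `tr(γ(p)ᵀ γ(q)) = 4 (p·q)² − 1`, a polynomial identity modulo
`|p|² = |q|² = 1` (`trace_gamma_transpose_mul_gamma`). The `zᵢ` are chosen so that
`4 S = Σ zᵢ Eᵢ` (`four_smul_diagonal`) and `Σ zᵢ = 0`. Hence `4 A = Σ zᵢ γ(mᵢ)`, and
`4 tr(Aᵀ γ(q)) = Σ zᵢ (4 (mᵢ·q)² − 1) = 4 Σ zᵢ (mᵢ·q)²`.
-/

open Matrix

/-- The standard map from unit quaternions `q = (w,x,y,z) ∈ S³ ⊂ ℝ⁴` to rotation matrices. -/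
noncomputable def gamma (q : Fin 4 → ℝ) : Matrix (Fin 3) (Fin 3) ℝ :=
  !![1 - 2*(q 2)^2 - 2*(q 3)^2, 2*(q 1)*(q 2) - 2*(q 0)*(q 3), 2*(q 1)*(q 3) + 2*(q 0)*(q 2);
     2*(q 1)*(q 2) + 2*(q 0)*(q 3), 1 - 2*(q 1)^2 - 2*(q 3)^2, 2*(q 2)*(q 3) - 2*(q 0)*(q 1);
     2*(q 1)*(q 3) - 2*(q 0)*(q 2), 2*(q 2)*(q 3) + 2*(q 0)*(q 1), 1 - 2*(q 1)^2 - 2*(q 2)^2]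

/-- `E₁ = diag(1,−1,−1)`, `E₂ = diag(−1,1,−1)`, `E₃ = diag(−1,−1,1)`, `E₄ = I₃`. -/
noncomputable def EMat : Fin 4 → Matrix (Fin 3) (Fin 3) ℝ :=
  ![Matrix.diagonal ![1, -1, -1], Matrix.diagonal ![-1, 1, -1],
    Matrix.diagonal ![-1, -1, 1], 1]

/-- `R ∈ SO(3)`: a `3 × 3` real orthogonal matrix with determinant `1`. -/
def IsSO3 (R : Matrix (Fin 3) (Fin 3) ℝ) : Prop := Rᵀ * R = 1 ∧ R.det = 1

/-- The trace of the relative rotation is `1 + 2 cos θ = 4 cos² (θ/2) − 1`, and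
`p·q = cos (θ/2)` up to sign. -/
lemma trace_gamma_transpose_mul_gamma (p q : Fin 4 → ℝ)
    (hp : ∑ k, (p k)^2 = 1) (hq : ∑ k, (q k)^2 = 1) :
    ((gamma p)ᵀ * gamma q).trace = 4 * (∑ k, p k * q k)^2 - 1 := by
  simp only [Fin.sum_univ_four] at hp hq ⊢
  simp [gamma, Matrix.trace, Matrix.mul_apply, Fin.sum_univ_three]
  -- Eliminating the scalar parts through their squares reduces the claim to a ring identity.
  have hp0 : p 0 ^ 2 = 1 - p 1 ^ 2 - p 2 ^ 2 - p 3 ^ 2 := by linarith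
  have hq0 : q 0 ^ 2 = 1 - q 1 ^ 2 - q 2 ^ 2 - q 3 ^ 2 := by linarith
  ring_nf
  simp only [hp0, hq0]
  ring

lemma four_smul_diagonal (s : Fin 3 → ℝ) :
    (4 : ℝ) • Matrix.diagonal s =
      (s 0 - s 1 - s 2) • EMat 0 + (s 1 - s 0 - s 2) • EMat 1 +
        (s 2 - s 0 - s 1) • EMat 2 + (s 0 + s 1 + s 2) • EMat 3 := by
  ext i j
  fin_cases i <;> fin_cases j <;> simp [EMat] <;> ring

/-- Let `U, V ∈ SO(3)`, `S = diag(s₁,s₂,s₃)`, `A = U S Vᵀ`, and set `z₁ = s₁−s₂−s₃`,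
`z₂ = s₂−s₁−s₃`, `z₃ = s₃−s₁−s₂`, `z₄ = s₁+s₂+s₃`. For `i = 1,…,4` let `mᵢ ∈ S³` be unit
quaternions with `γ(mᵢ) = U Eᵢ Vᵀ`. Then for every unit quaternion `q ∈ S³`,
`tr(Aᵀ γ(q)) = Σᵢ zᵢ (mᵢ·q)²`. -/
theorem stmt_3 (U V : Matrix (Fin 3) (Fin 3) ℝ) (hU : IsSO3 U) (hV : IsSO3 V)
    (s : Fin 3 → ℝ) (A : Matrix (Fin 3) (Fin 3) ℝ) (hA : A = U * Matrix.diagonal s * Vᵀ)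
    (z : Fin 4 → ℝ)
    (hz : z = ![s 0 - s 1 - s 2, s 1 - s 0 - s 2, s 2 - s 0 - s 1, s 0 + s 1 + s 2])
    (m : Fin 4 → Fin 4 → ℝ) (hm_unit : ∀ i, ∑ k, (m i k)^2 = 1)
    (hm : ∀ i, gamma (m i) = U * EMat i * Vᵀ) :
    ∀ q : Fin 4 → ℝ, (∑ k, (q k)^2 = 1) →
      (Aᵀ * gamma q).trace = ∑ i, z i * (∑ k, m i k * q k)^2 := by
  intro q hq
  have h4A : (4 : ℝ) • A =
      (s 0 - s 1 - s 2) • gamma (m 0) + (s 1 - s 0 - s 2) • gamma (m 1) +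
        (s 2 - s 0 - s 1) • gamma (m 2) + (s 0 + s 1 + s 2) • gamma (m 3) := by
    rw [hA, ← Matrix.smul_mul, ← Matrix.mul_smul, four_smul_diagonal]
    simp only [hm, Matrix.mul_add, Matrix.add_mul, Matrix.mul_smul, Matrix.smul_mul]
  have htr := congrArg (fun B => (Bᵀ * gamma q).trace) h4A
  simp only [Matrix.transpose_add, Matrix.transpose_smul, Matrix.add_mul, Matrix.smul_mul,
    Matrix.trace_add, Matrix.trace_smul, smul_eq_mul,
    fun i => trace_gamma_transpose_mul_gamma (m i) q (hm_unit i) hq] at htr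
  rw [Fin.sum_univ_four (fun i => z i * (∑ k, m i k * q k)^2), hz]
  simp only [Matrix.cons_val]
  linarith
end

section
/- Let U, V ∈ SO(3), S = diag(s₁,s₂,s₃), A = U S Vᵀ, z₁ = s₁−s₂−s₃, z₂ = s₂−s₁−s₃, z₃ = s₃−s₁−s₂, z₄ = s₁+s₂+s₃, and let mᵢ ∈ S³ satisfy γ(mᵢ) = U Eᵢ Vᵀ for i = 1,…,4. Then the matrix Fisher normalizing constant equals 1/(2π²) times the Bingham normalizing constant: ∫_{SO(3)} exp(tr(Aᵀ R)) dR = (1/2π²) ∮_{S³} exp(Σᵢ₌₁⁴ zᵢ (mᵢ·q)²) dq, where dR is the Haar probability measure on SO(3) and dq is the surface measure on S³. -/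
/-!
The double cover `gamma : S³ → SO(3)` pushes the normalized surface measure of `S³` to Haar measure.
Indeed, let `f ≥ 0` be measurable on matrices. Left multiplication by a unit quaternion `p` is an
orthogonal map of `ℝ⁴` (`quatMul_orthogonal`) and `gamma` is multiplicative (`gamma_mul`), so
`∫ f (gamma q) dσ(q) = ∫ f (R * gamma q) dσ(q)` for `R = gamma p`, which by surjectivity
(`exists_gamma_eq`) is an arbitrary rotation. Averaging over `R` with respect to `ν`, swapping the
integrals and using right invariance of `ν` gives `σ(S³) ∫ f dν` (`lintegral_gamma`).

It remains to compare the integrands on the sphere. One has `4 S = ∑ zᵢ Eᵢ` and `∑ zᵢ = 0`, while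
`tr (gamma mᵀ * gamma q) = 4 (m·q)² - 1` for unit vectors `m`, `q` (`trace_gamma`); hence
`tr (Aᵀ * gamma q) = ∑ zᵢ (mᵢ·q)²` (`trace_eq_bingham`).
-/

open Matrix MeasureTheory

/-- Borel/pi measurable structure on `3 × 3` real matrices. -/
noncomputable instance : MeasurableSpace (Matrix (Fin 3) (Fin 3) ℝ) :=
  inferInstanceAs (MeasurableSpace (Fin 3 → Fin 3 → ℝ))

/-- The unit sphere `S³ ⊂ ℝ⁴`. -/
def unitSphere4 : Set (Fin 4 → ℝ) := {q | ∑ i, (q i)^2 = 1}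

/-- `σ` is the surface measure on the unit sphere `S³ ⊂ ℝ⁴`: it is carried by the sphere,
invariant under the orthogonal group `O(4)`, and has total mass `2π²`. -/
def IsSphereMeasure (σ : Measure (Fin 4 → ℝ)) : Prop :=
  σ unitSphere4ᶜ = 0 ∧ σ Set.univ = ENNReal.ofReal (2 * Real.pi ^ 2) ∧
    ∀ M : Matrix (Fin 4) (Fin 4) ℝ, Mᵀ * M = 1 → σ.map M.mulVec = σ

/-- `ν` is the Haar probability measure on `SO(3)` (viewed as a measure on `3 × 3` matrices):
a probability measure carried by `SO(3)` and invariant under left and right translation. -/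
def IsHaarSO3 (ν : Measure (Matrix (Fin 3) (Fin 3) ℝ)) : Prop :=
  ν {R | IsSO3 R}ᶜ = 0 ∧ ν Set.univ = 1 ∧
    (∀ g, IsSO3 g → ν.map (fun R => g * R) = ν) ∧
    (∀ g, IsSO3 g → ν.map (fun R => R * g) = ν)

/-! ### Quaternion multiplication and `gamma` -/

/-- The matrix of left multiplication by the quaternion `p = (w,x,y,z)` on `ℍ = ℝ⁴`. -/
def quatMul (p : Fin 4 → ℝ) : Matrix (Fin 4) (Fin 4) ℝ :=
  !![p 0, -p 1, -p 2, -p 3;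
     p 1, p 0, -p 3, p 2;
     p 2, p 3, p 0, -p 1;
     p 3, -p 2, p 1, p 0]

lemma quatMul_orthogonal {p : Fin 4 → ℝ} (hp : ∑ i, (p i)^2 = 1) :
    (quatMul p)ᵀ * quatMul p = 1 := by
  simp only [Fin.sum_univ_four] at hp
  ext i j
  fin_cases i <;> fin_cases j <;>
    simp [quatMul, Matrix.mul_apply, Fin.sum_univ_four] <;>
    first | ring1 | linear_combination hp

/-- On unit quaternions `gamma` agrees with a matrix of homogeneous quadratic forms, for which
multiplicativity and the orthogonality relations are identities of polynomials. -/
lemma gamma_homog {q : Fin 4 → ℝ} (hq : ∑ i, (q i)^2 = 1) :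
    gamma q =
      !![(q 0)^2 + (q 1)^2 - (q 2)^2 - (q 3)^2, 2*(q 1)*(q 2) - 2*(q 0)*(q 3),
          2*(q 1)*(q 3) + 2*(q 0)*(q 2);
        2*(q 1)*(q 2) + 2*(q 0)*(q 3), (q 0)^2 - (q 1)^2 + (q 2)^2 - (q 3)^2,
          2*(q 2)*(q 3) - 2*(q 0)*(q 1);
        2*(q 1)*(q 3) - 2*(q 0)*(q 2), 2*(q 2)*(q 3) + 2*(q 0)*(q 1),
          (q 0)^2 - (q 1)^2 - (q 2)^2 + (q 3)^2] := by
  simp only [Fin.sum_univ_four] at hq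
  ext i j
  fin_cases i <;> fin_cases j <;> simp [gamma] <;> linear_combination -hq

lemma quatMul_unit {p q : Fin 4 → ℝ} (hp : ∑ i, (p i)^2 = 1) (hq : ∑ i, (q i)^2 = 1) :
    ∑ i, ((quatMul p *ᵥ q) i)^2 = 1 := by
  simp only [Fin.sum_univ_four] at hp hq
  simp [quatMul, Matrix.mulVec, dotProduct, Fin.sum_univ_four]
  linear_combination ((q 0)^2 + (q 1)^2 + (q 2)^2 + (q 3)^2) * hp + hq

lemma gamma_mul {p q : Fin 4 → ℝ} (hp : ∑ i, (p i)^2 = 1) (hq : ∑ i, (q i)^2 = 1) :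
    gamma (quatMul p *ᵥ q) = gamma p * gamma q := by
  rw [gamma_homog hp, gamma_homog hq, gamma_homog (quatMul_unit hp hq)]
  ext i j
  fin_cases i <;> fin_cases j <;>
    simp [quatMul, Matrix.mulVec, dotProduct, Matrix.mul_apply, Fin.sum_univ_four,
      Fin.sum_univ_three] <;> ring

lemma gamma_isSO3 {q : Fin 4 → ℝ} (hq : ∑ i, (q i)^2 = 1) : IsSO3 (gamma q) := by
  have h := hq
  simp only [Fin.sum_univ_four] at h
  rw [gamma_homog hq]
  constructor
  · ext i j
    fin_cases i <;> fin_cases j <;>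
      simp [Matrix.mul_apply, Fin.sum_univ_three] <;>
      first
        | ring1
        | linear_combination ((q 0)^2 + (q 1)^2 + (q 2)^2 + (q 3)^2 + 1) * h
  · rw [Matrix.det_fin_three]
    simp
    linear_combination (((q 0)^2 + (q 1)^2 + (q 2)^2 + (q 3)^2)^2 +
      ((q 0)^2 + (q 1)^2 + (q 2)^2 + (q 3)^2) + 1) * h

/-! ### Surjectivity of `gamma` onto `SO(3)` -/

/-- The symmetric `4 × 4` matrix, affine in `R`, which equals `4 q qᵀ` when `R = gamma q`
for a unit quaternion `q`. -/
def quatGram (R : Matrix (Fin 3) (Fin 3) ℝ) : Matrix (Fin 4) (Fin 4) ℝ :=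
  !![1 + R 0 0 + R 1 1 + R 2 2, R 2 1 - R 1 2, R 0 2 - R 2 0, R 1 0 - R 0 1;
     R 2 1 - R 1 2, 1 + R 0 0 - R 1 1 - R 2 2, R 0 1 + R 1 0, R 0 2 + R 2 0;
     R 0 2 - R 2 0, R 0 1 + R 1 0, 1 - R 0 0 + R 1 1 - R 2 2, R 1 2 + R 2 1;
     R 1 0 - R 0 1, R 0 2 + R 2 0, R 1 2 + R 2 1, 1 - R 0 0 - R 1 1 + R 2 2]

/-- For a rotation `R` the minors of `quatGram R` vanish, i.e. `quatGram R` has rank one. -/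
lemma quatGram_rank_one {R : Matrix (Fin 3) (Fin 3) ℝ} (hR : IsSO3 R) (a i j : Fin 4) :
    quatGram R a i * quatGram R a j = quatGram R a a * quatGram R i j := by
  obtain ⟨h, hd⟩ := hR
  have h' : R * Rᵀ = 1 := mul_eq_one_comm.mp h
  -- the cofactor matrix of a rotation is the rotation itself
  have hadj : R.adjugate = Rᵀ := by
    calc R.adjugate = (Rᵀ * R) * R.adjugate := by rw [h, one_mul]
      _ = Rᵀ := by rw [mul_assoc, Matrix.mul_adjugate, hd, one_smul, mul_one]
  have e := fun i j => congrFun (congrFun h i) j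
  have e' := fun i j => congrFun (congrFun h' i) j
  have c := fun i j => congrFun (congrFun hadj i) j
  have e00 := e 0 0
  have e01 := e 0 1
  have e02 := e 0 2
  have e11 := e 1 1
  have e12 := e 1 2
  have e22 := e 2 2
  have f00 := e' 0 0
  have f01 := e' 0 1
  have f02 := e' 0 2
  have f11 := e' 1 1
  have f12 := e' 1 2
  have f22 := e' 2 2
  have c00 := c 0 0
  have c01 := c 0 1
  have c02 := c 0 2
  have c10 := c 1 0
  have c11 := c 1 1
  have c12 := c 1 2
  have c20 := c 2 0
  have c21 := c 2 1
  have c22 := c 2 2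
  clear e e' c hadj h h' hd
  simp [Matrix.mul_apply, Fin.sum_univ_three] at e00 e01 e02 e11 e12 e22 f00 f01 f02 f11 f12 f22
  simp [Matrix.adjugate_fin_three] at c00 c01 c02 c10 c11 c12 c20 c21 c22
  -- each minor lies in the ideal generated by these quadratic relations
  fin_cases a <;> fin_cases i <;> fin_cases j <;> simp [quatGram] <;> first | ring1 | grind

lemma exists_gamma_eq {R : Matrix (Fin 3) (Fin 3) ℝ} (hR : IsSO3 R) :
    ∃ p : Fin 4 → ℝ, ∑ i, (p i)^2 = 1 ∧ gamma p = R := by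
  -- the trace of `quatGram R` is `4`, so one of its diagonal entries is positive
  obtain ⟨a, ha⟩ : ∃ a, 0 < quatGram R a a := by
    by_contra! hneg
    have h0 := hneg 0
    have h1 := hneg 1
    have h2 := hneg 2
    have h3 := hneg 3
    simp [quatGram] at h0 h1 h2 h3
    linarith
  have hs : Real.sqrt (quatGram R a a) ^ 2 = quatGram R a a := Real.sq_sqrt ha.le
  have hs0 : Real.sqrt (quatGram R a a) ≠ 0 := (Real.sqrt_pos.2 ha).ne'
  obtain ⟨p, hp⟩ : ∃ p : Fin 4 → ℝ, ∀ i j, 4 * (p i * p j) = quatGram R i j := by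
    refine ⟨fun i => quatGram R a i / (2 * Real.sqrt (quatGram R a a)), fun i j => ?_⟩
    have := quatGram_rank_one hR a i j
    field_simp
    rw [hs]
    linear_combination 4 * this
  have h00 := hp 0 0
  have h01 := hp 0 1
  have h02 := hp 0 2
  have h03 := hp 0 3
  have h11 := hp 1 1
  have h12 := hp 1 2
  have h13 := hp 1 3
  have h22 := hp 2 2
  have h23 := hp 2 3
  have h33 := hp 3 3
  simp [quatGram] at h00 h01 h02 h03 h11 h12 h13 h22 h23 h33
  refine ⟨p, ?_, ?_⟩
  · simp only [Fin.sum_univ_four]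
    linarith
  · ext i j
    fin_cases i <;> fin_cases j <;> simp [gamma] <;> linarith

/-! ### The Fisher and Bingham exponents -/

/-- The Frobenius inner product of two rotations in terms of their quaternions. -/
lemma trace_gamma {m q : Fin 4 → ℝ} (hm : ∑ i, (m i)^2 = 1) (hq : ∑ i, (q i)^2 = 1) :
    ((gamma m)ᵀ * gamma q).trace = 4 * (∑ k, m k * q k)^2 - 1 := by
  rw [gamma_homog hm, gamma_homog hq]
  simp only [Fin.sum_univ_four] at hm hq ⊢
  simp [Matrix.trace, Matrix.mul_apply, Fin.sum_univ_three]
  linear_combination (-(q 0)^2 - (q 1)^2 - (q 2)^2 - (q 3)^2) * hm - hq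

lemma trace_eq_bingham (U V : Matrix (Fin 3) (Fin 3) ℝ) (s : Fin 3 → ℝ) (z : Fin 4 → ℝ)
    (hz : z = ![s 0 - s 1 - s 2, s 1 - s 0 - s 2, s 2 - s 0 - s 1, s 0 + s 1 + s 2])
    (m : Fin 4 → Fin 4 → ℝ) (hm_unit : ∀ i, ∑ k, (m i k)^2 = 1)
    (hm : ∀ i, gamma (m i) = U * EMat i * Vᵀ) {q : Fin 4 → ℝ} (hq : ∑ i, (q i)^2 = 1) :
    ((U * Matrix.diagonal s * Vᵀ)ᵀ * gamma q).trace = ∑ i, z i * (∑ k, m i k * q k)^2 := by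
  have hS : Matrix.diagonal s = ∑ i, (z i / 4) • EMat i := by
    ext i j
    fin_cases i <;> fin_cases j <;>
      simp [hz, EMat, Fin.sum_univ_four, Matrix.diagonal] <;> ring
  have hA : U * Matrix.diagonal s * Vᵀ = ∑ i, (z i / 4) • gamma (m i) := by
    simp only [hS, hm, Finset.mul_sum, Finset.sum_mul, Matrix.mul_smul, Matrix.smul_mul]
  have hz0 : ∑ i, z i = 0 := by
    simp [hz, Fin.sum_univ_four]
    ring
  calc ((U * Matrix.diagonal s * Vᵀ)ᵀ * gamma q).trace
      = ∑ i, z i / 4 * (4 * (∑ k, m i k * q k)^2 - 1) := by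
        simp only [hA, Matrix.transpose_sum, Finset.sum_mul, Matrix.trace_sum,
          Matrix.transpose_smul, Matrix.smul_mul, Matrix.trace_smul, smul_eq_mul,
          trace_gamma (hm_unit _) hq]
    _ = ∑ i, z i * (∑ k, m i k * q k)^2 - (∑ i, z i) / 4 := by
        rw [Finset.sum_div, ← Finset.sum_sub_distrib]
        exact Finset.sum_congr rfl fun i _ => by ring
    _ = _ := by rw [hz0]; ring

/-! ### The image of the surface measure under `gamma` -/

lemma measurable_entry (i j : Fin 3) :
    Measurable fun R : Matrix (Fin 3) (Fin 3) ℝ => R i j :=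
  (measurable_pi_apply j).comp (measurable_pi_apply i)

lemma measurable_of_entries {α : Type*} [MeasurableSpace α]
    {F : α → Matrix (Fin 3) (Fin 3) ℝ} (h : ∀ i j, Measurable fun a => F a i j) : Measurable F :=
  measurable_pi_iff.2 fun i => measurable_pi_iff.2 fun j => h i j

lemma measurable_gamma : Measurable gamma := by
  refine measurable_of_entries fun i j => ?_
  fin_cases i <;> fin_cases j <;> simp [gamma] <;> fun_prop

lemma Measurable.matrix_mul3 {α : Type*} [MeasurableSpace α]
    {F G : α → Matrix (Fin 3) (Fin 3) ℝ} (hF : Measurable F) (hG : Measurable G) :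
    Measurable fun a => F a * G a := by
  refine measurable_of_entries fun i j => ?_
  simp only [Matrix.mul_apply]
  exact Finset.measurable_sum _ fun k _ =>
    ((measurable_entry i k).comp hF).mul ((measurable_entry k j).comp hG)

/-- `gamma` pushes the surface measure to `2π²` times Haar measure. -/
lemma lintegral_gamma {σ : Measure (Fin 4 → ℝ)} (hσ : IsSphereMeasure σ)
    {ν : Measure (Matrix (Fin 3) (Fin 3) ℝ)} (hν : IsHaarSO3 ν)
    {f : Matrix (Fin 3) (Fin 3) ℝ → ENNReal} (hf : Measurable f) :
    ∫⁻ q, f (gamma q) ∂σ = ENNReal.ofReal (2 * Real.pi ^ 2) * ∫⁻ R, f R ∂ν := by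
  obtain ⟨hσ0, hσ1, hσinv⟩ := hσ
  obtain ⟨hν0, hν1, -, hνinv⟩ := hν
  have : IsFiniteMeasure σ := ⟨by rw [hσ1]; exact ENNReal.ofReal_lt_top⟩
  have : IsFiniteMeasure ν := ⟨by rw [hν1]; exact ENNReal.one_lt_top⟩
  have hσae : ∀ᵐ q ∂σ, ∑ i, (q i)^2 = 1 := hσ0
  have hνae : ∀ᵐ R ∂ν, IsSO3 R := hν0
  have hleft : ∀ᵐ R ∂ν, ∫⁻ q, f (R * gamma q) ∂σ = ∫⁻ q, f (gamma q) ∂σ := by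
    filter_upwards [hνae] with R hR
    obtain ⟨p, hp, rfl⟩ := exists_gamma_eq hR
    have hmeas : Measurable (quatMul p).mulVec :=
      (Continuous.matrix_mulVec continuous_const continuous_id).measurable
    calc ∫⁻ q, f (gamma p * gamma q) ∂σ = ∫⁻ q, f (gamma (quatMul p *ᵥ q)) ∂σ := by
          refine lintegral_congr_ae ?_
          filter_upwards [hσae] with q hq
          rw [gamma_mul hp hq]
      _ = ∫⁻ q, f (gamma q) ∂(σ.map (quatMul p).mulVec) :=
          (lintegral_map (hf.comp measurable_gamma) hmeas).symm
      _ = ∫⁻ q, f (gamma q) ∂σ := by rw [hσinv _ (quatMul_orthogonal hp)]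
  have hright : ∀ᵐ q ∂σ, ∫⁻ R, f (R * gamma q) ∂ν = ∫⁻ R, f R ∂ν := by
    filter_upwards [hσae] with q hq
    have hmul : Measurable fun R : Matrix (Fin 3) (Fin 3) ℝ => R * gamma q :=
      measurable_id.matrix_mul3 measurable_const
    rw [← lintegral_map hf hmul, hνinv _ (gamma_isSO3 hq)]
  have hjoint : Measurable (Function.uncurry fun R q => f (R * gamma q)) :=
    hf.comp (measurable_fst.matrix_mul3 (measurable_gamma.comp measurable_snd))
  calc ∫⁻ q, f (gamma q) ∂σ = ∫⁻ _R, ∫⁻ q, f (gamma q) ∂σ ∂ν := by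
        rw [lintegral_const, hν1, mul_one]
    _ = ∫⁻ R, ∫⁻ q, f (R * gamma q) ∂σ ∂ν := (lintegral_congr_ae hleft).symm
    _ = ∫⁻ q, ∫⁻ R, f (R * gamma q) ∂ν ∂σ := lintegral_lintegral_swap hjoint.aemeasurable
    _ = ∫⁻ _q, ∫⁻ R, f R ∂ν ∂σ := lintegral_congr_ae hright
    _ = _ := by rw [lintegral_const, hσ1, mul_comm]

/-! ### Equality of the normalizing constants -/

/-- With `A = U S Vᵀ` (`U, V ∈ SO(3)`, `S = diag(s₁,s₂,s₃)`), `z₁ = s₁−s₂−s₃`, `z₂ = s₂−s₁−s₃`,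
`z₃ = s₃−s₁−s₂`, `z₄ = s₁+s₂+s₃`, and unit quaternions `mᵢ` with `γ(mᵢ) = U Eᵢ Vᵀ`, the matrix
Fisher normalizing constant equals `1/(2π²)` times the Bingham normalizing constant:
`∫_{SO(3)} exp(tr(Aᵀ R)) dR = (1/2π²) ∮_{S³} exp(Σᵢ zᵢ (mᵢ·q)²) dq`. -/
theorem stmt_5 (σ : Measure (Fin 4 → ℝ)) (hσ : IsSphereMeasure σ)
    (ν : Measure (Matrix (Fin 3) (Fin 3) ℝ)) (hν : IsHaarSO3 ν)
    (U V : Matrix (Fin 3) (Fin 3) ℝ) (hU : IsSO3 U) (hV : IsSO3 V)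
    (s : Fin 3 → ℝ) (A : Matrix (Fin 3) (Fin 3) ℝ) (hA : A = U * Matrix.diagonal s * Vᵀ)
    (z : Fin 4 → ℝ)
    (hz : z = ![s 0 - s 1 - s 2, s 1 - s 0 - s 2, s 2 - s 0 - s 1, s 0 + s 1 + s 2])
    (m : Fin 4 → Fin 4 → ℝ) (hm_unit : ∀ i, ∑ k, (m i k)^2 = 1)
    (hm : ∀ i, gamma (m i) = U * EMat i * Vᵀ) :
    ∫ R, Real.exp ((Aᵀ * R).trace) ∂ν
      = (1 / (2 * Real.pi ^ 2)) * ∫ q, Real.exp (∑ i, z i * (∑ k, m i k * q k)^2) ∂σ := by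
  subst hA
  have hf : Measurable fun R : Matrix (Fin 3) (Fin 3) ℝ =>
      Real.exp (((U * Matrix.diagonal s * Vᵀ)ᵀ * R).trace) := by
    refine Real.measurable_exp.comp ?_
    simp only [Matrix.trace, Matrix.diag]
    exact Finset.measurable_sum _ fun i _ =>
      (measurable_entry i i).comp (measurable_const.matrix_mul3 measurable_id)
  have hσae : ∀ᵐ q ∂σ, ∑ i, (q i)^2 = 1 := hσ.1
  have hexp : ∫ q, Real.exp (∑ i, z i * (∑ k, m i k * q k)^2) ∂σ
      = ∫ q, Real.exp (((U * Matrix.diagonal s * Vᵀ)ᵀ * gamma q).trace) ∂σ := by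
    refine integral_congr_ae ?_
    filter_upwards [hσae] with q hq
    rw [trace_eq_bingham U V s z hz m hm_unit hm hq]
  -- for nonnegative measurable functions both integrals reduce to lower Lebesgue integrals
  rw [hexp, integral_eq_lintegral_of_nonneg_ae (.of_forall fun _ => (Real.exp_pos _).le)
      hf.aestronglyMeasurable,
    integral_eq_lintegral_of_nonneg_ae (.of_forall fun _ => (Real.exp_pos _).le)
      (hf.comp measurable_gamma).aestronglyMeasurable,
    lintegral_gamma hσ hν hf.ennreal_ofReal, ENNReal.toReal_mul,
    ENNReal.toReal_ofReal (by positivity)]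
  field_simp
end
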